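/- (Lemma 5.3: covering bound for a single strategy.) Assume k ≥ 4, k is divisible by 4, and n ≥ 3k/2. Then for every fixed p ∈ Δ_n, the number of subsets S ⊆ {1,…,n} with |S| = k and ℓ(p,S) < 2/k is at most the binomial coefficient C(n, 3k/4). -/

import Mathlib

/-!
Let `q` be the mass that `p` puts outside `S`. The loss is at least `4 q`, and at least `p j` for
every `j ∈ S`, so a loss below `c` gives `q < c / 4` and `p j < c` on `S`. Call an index heavy if
its weight is at least `c / 4`; this depends on `p` only. Every `S` of loss below `c` contains all
heavy indices, because one outside `S` would already weigh more than `q`. If there are `t` heavy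
indices and `|S| = k`, the total mass `1` is less than `c / 4 + (k - t) * (c / 4) + t * c`, which
for `c = 2 / k` forces `3 t ≥ k`. So all the sets counted share `k / 4` heavy elements, and each is
determined by its remaining `3 k / 4` elements.
-/

/-- The game matrix `A_S`: Alice (the row player) gets loss `4` outside the
support `S`, loss `1` on the diagonal inside `S`, and `0` otherwise. -/
def gameA {n : ℕ} (S : Finset (Fin n)) (i j : Fin n) : ℝ :=
  if i ∈ S then (if i = j then 1 else 0) else 4

/-- `ℓ(p,S)`: the worst-case loss of row strategy `p` in the game `A_S`,
i.e. `max_j ∑_i p i * A_S[i,j]`. -/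
noncomputable def gameLoss {n : ℕ} (hn : 0 < n) (p : Fin n → ℝ) (S : Finset (Fin n)) : ℝ :=
  Finset.univ.sup' ⟨⟨0, hn⟩, Finset.mem_univ _⟩ (fun j => ∑ i, p i * gameA S i j)

section

open Finset

variable {ι M : Type*}

lemma ncard_le_choose_of_sized_of_forall_subset [Fintype ι] {𝒮 : Set (Finset ι)} {U : Finset ι}
    {k : ℕ} (hsized : 𝒮.Sized k) (hU : ∀ S ∈ 𝒮, U ⊆ S) :
    𝒮.ncard ≤ (Fintype.card ι - #U).choose (k - #U) := by
  classical
  rw [← card_compl, ← card_powersetCard, ← Set.ncard_coe_finset]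
  refine Set.ncard_le_ncard_of_injOn (· \ U) (fun S hS ↦ ?_) (fun S hS S' hS' heq ↦ ?_)
  · have hsub : S \ U ⊆ Uᶜ := fun i hi ↦ mem_compl.2 (mem_sdiff.1 hi).2
    exact mem_coe.2 (mem_powersetCard.2 ⟨hsub, by rw [card_sdiff_of_subset (hU S hS), hsized hS]⟩)
  · rw [← sdiff_union_of_subset (hU S hS), ← sdiff_union_of_subset (hU S' hS')]
    exact congrArg (· ∪ U) heq

/-- The heavy indices of the weight vector `p`: those of weight at least `a`. -/
def heavyIndices [Fintype ι] [LinearOrder M] (p : ι → M) (a : M) : Finset ι :=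
  {i | a ≤ p i}

lemma mem_heavyIndices [Fintype ι] [LinearOrder M] {p : ι → M} {a : M} {i : ι} :
    i ∈ heavyIndices p a ↔ a ≤ p i := by
  simp [heavyIndices]

section Mass

variable [Fintype ι] [AddCommMonoid M] [LinearOrder M] [IsOrderedAddMonoid M]
  {p : ι → M} {S : Finset ι} {a b : M}

lemma heavyIndices_subset_of_sum_compl_lt [DecidableEq ι] (hp : ∀ i, 0 ≤ p i)
    (hS : ∑ i ∈ Sᶜ, p i < a) : heavyIndices p a ⊆ S := by
  intro i hi
  by_contra hiS
  have hi_le : p i ≤ ∑ j ∈ Sᶜ, p j := single_le_sum (fun j _ ↦ hp j) (mem_compl.2 hiS)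
  exact ((mem_heavyIndices.1 hi).trans hi_le).not_gt hS

lemma sum_le_nsmul_add_nsmul_heavyIndices (hsub : heavyIndices p a ⊆ S) (hb : ∀ i ∈ S, p i ≤ b) :
    ∑ i ∈ S, p i ≤ (#S - #(heavyIndices p a)) • a + #(heavyIndices p a) • b := by
  classical
  rw [← sum_sdiff hsub, ← card_sdiff_of_subset hsub]
  gcongr
  · refine sum_le_card_nsmul _ _ _ fun i hi ↦ ?_
    exact (not_le.1 (mt mem_heavyIndices.2 (mem_sdiff.1 hi).2)).le
  · exact sum_le_card_nsmul _ _ _ fun i hi ↦ hb i (hsub hi)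

end Mass

section GameLoss

lemma sum_mul_gameA {n : ℕ} (p : Fin n → ℝ) (S : Finset (Fin n)) (j : Fin n) :
    ∑ i, p i * gameA S i j = 4 * ∑ i ∈ Sᶜ, p i + if j ∈ S then p j else 0 := by
  have inside : ∑ i ∈ S, p i * gameA S i j = if j ∈ S then p j else 0 := by
    rw [← sum_ite_eq' S j p]
    exact sum_congr rfl fun i hi ↦ by simp [gameA, hi]
  have outside : ∑ i ∈ Sᶜ, p i * gameA S i j = 4 * ∑ i ∈ Sᶜ, p i := by
    rw [mul_sum]
    exact sum_congr rfl fun i hi ↦ by simp [gameA, mem_compl.1 hi, mul_comm]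
  rw [← sum_add_sum_compl S, inside, outside, add_comm]

variable {n : ℕ} {hn : 0 < n} {p : Fin n → ℝ} {S : Finset (Fin n)}

lemma four_mul_sum_compl_add_le_gameLoss (j : Fin n) :
    4 * ∑ i ∈ Sᶜ, p i + (if j ∈ S then p j else 0) ≤ gameLoss hn p S :=
  (sum_mul_gameA p S j).symm.le.trans
    (le_sup' (fun j ↦ ∑ i, p i * gameA S i j) (mem_univ j))

lemma four_mul_sum_compl_le_gameLoss (hp : ∀ i, 0 ≤ p i) :
    4 * ∑ i ∈ Sᶜ, p i ≤ gameLoss hn p S :=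
  (le_add_of_nonneg_right (ite_nonneg (hp _) le_rfl)).trans
    (four_mul_sum_compl_add_le_gameLoss ⟨0, hn⟩)

lemma le_gameLoss_of_mem (hp : ∀ i, 0 ≤ p i) {j : Fin n} (hj : j ∈ S) :
    p j ≤ gameLoss hn p S := by
  have hcol := four_mul_sum_compl_add_le_gameLoss (hn := hn) (p := p) (S := S) j
  rw [if_pos hj] at hcol
  linarith [sum_nonneg fun i (_ : i ∈ Sᶜ) ↦ hp i]

variable {c : ℝ}

lemma heavyIndices_subset_of_gameLoss_lt (hp : ∀ i, 0 ≤ p i) (hc : gameLoss hn p S < c) :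
    heavyIndices p (c / 4) ⊆ S :=
  heavyIndices_subset_of_sum_compl_lt hp <| by
    linarith [four_mul_sum_compl_le_gameLoss (hn := hn) (S := S) hp]

lemma four_lt_mul_of_gameLoss_lt (hp : ∀ i, 0 ≤ p i) (hp1 : ∑ i, p i = 1)
    (hc : gameLoss hn p S < c) :
    4 < c * (#S + 3 * #(heavyIndices p (c / 4)) + 1) := by
  have hsub := heavyIndices_subset_of_gameLoss_lt hp hc
  have hmass := sum_le_nsmul_add_nsmul_heavyIndices hsub
    fun i hi ↦ (le_gameLoss_of_mem hp hi).trans hc.le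
  rw [nsmul_eq_mul, nsmul_eq_mul, Nat.cast_sub (card_le_card hsub)] at hmass
  have hcompl := four_mul_sum_compl_le_gameLoss (hn := hn) (S := S) hp
  have htotal := sum_add_sum_compl S p
  linarith

lemma le_card_heavyIndices_of_gameLoss_lt {m : ℕ} (hp : ∀ i, 0 ≤ p i) (hp1 : ∑ i, p i = 1)
    (hc : gameLoss hn p S < c) (hm : c * (#S + 3 * m - 2) ≤ 4) :
    m ≤ #(heavyIndices p (c / 4)) := by
  have hlt := four_lt_mul_of_gameLoss_lt hp hp1 hc
  have hc0 : 0 < c := pos_of_mul_pos_left (four_pos.trans hlt) (by positivity)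
  have hlt' : (m : ℝ) < #(heavyIndices p (c / 4)) + 1 := by
    linarith [lt_of_mul_lt_mul_left (hm.trans_lt hlt) hc0.le]
  exact Nat.lt_succ_iff.1 (by exact_mod_cast hlt')

end GameLoss

/-- The condition on `c` says that `m - 1` heavy indices do not carry enough mass; for `c = 2 / k`
it reads `3 m ≤ k + 2`. -/
theorem game_loss_covering_general {n k m : ℕ} {c : ℝ} (hn : 0 < n) (hm : c * (k + 3 * m - 2) ≤ 4)
    {p : Fin n → ℝ} (hp : ∀ i, 0 ≤ p i) (hp1 : ∑ i, p i = 1) :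
    {S : Finset (Fin n) | #S = k ∧ gameLoss hn p S < c}.ncard ≤ (n - m).choose (k - m) := by
  obtain hempty | ⟨S₀, hS₀, hloss₀⟩ :=
    {S : Finset (Fin n) | #S = k ∧ gameLoss hn p S < c}.eq_empty_or_nonempty
  · simp [hempty]
  have hheavy : m ≤ #(heavyIndices p (c / 4)) :=
    le_card_heavyIndices_of_gameLoss_lt hp hp1 hloss₀ (by rwa [hS₀])
  obtain ⟨U, hU, rfl⟩ := exists_subset_card_eq hheavy
  simpa using ncard_le_choose_of_sized_of_forall_subset (fun _ hS ↦ hS.1)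
    fun S hS ↦ hU.trans (heavyIndices_subset_of_gameLoss_lt hp hS.2)

end

/-- **Lemma 5.3 (covering bound for a single strategy).** Assume `k ≥ 4`, `4 ∣ k`
and `n ≥ 3k/2`. For every fixed probability vector `p`, the number of size-`k`
subsets `S ⊆ [n]` with `ℓ(p,S) < 2/k` is at most `C(n, 3k/4)`. -/
theorem game_loss_covering (n k : ℕ) (hn : 0 < n) (hk4 : 4 ≤ k) (hkdvd : 4 ∣ k)
    (hkn : k ≤ n) (h32 : 3 * k ≤ 2 * n)
    (p : Fin n → ℝ) (hp0 : ∀ i, 0 ≤ p i) (hp1 : (∑ i, p i) = 1) :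
    {S : Finset (Fin n) | S.card = k ∧ gameLoss hn p S < 2 / k}.ncard ≤
      n.choose (3 * k / 4) := by
  obtain ⟨m, rfl⟩ := hkdvd
  have hm : 2 / ((4 * m : ℕ) : ℝ) * ((4 * m : ℕ) + 3 * m - 2) ≤ 4 := by
    have hm0 : 0 < (m : ℝ) := by exact_mod_cast (by omega : 0 < m)
    push_cast
    rw [div_mul_eq_mul_div, div_le_iff₀ (by positivity)]
    linarith
  calc _ ≤ (n - m).choose (4 * m - m) := game_loss_covering_general hn hm hp0 hp1
    _ = (n - m).choose (3 * (4 * m) / 4) := by congr 1; omega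
    _ ≤ n.choose (3 * (4 * m) / 4) := Nat.choose_le_choose _ (n.sub_le m)
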